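/- The logit sales probability is nonincreasing in the own offer price when the price-sensitive coefficients are nonpositive: fix K ≥ 1, a competitor price vector p ∈ ℝ^K, and coefficients β ∈ ℝ^5 with β₂ ≤ 0, β₃ ≤ 0, and β₅ ≤ 0. Then for all real prices a ≤ a', P̂(a', p) ≤ P̂(a, p). -/

import Mathlib

open scoped Classical

/-- The price rank of the own offer price `a` within the competitors' prices `p`:
`r(a,p) = 1 + card{k : p k < a} + 0.5 · card{k : p k = a}`. -/
noncomputable def priceRank (K : ℕ) (p : Fin K → ℝ) (a : ℝ) : ℝ :=
  1 + ((Finset.univ.filter (fun k => p k < a)).card : ℝ)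
    + 0.5 * ((Finset.univ.filter (fun k => p k = a)).card : ℝ)

/-- The linear combination `x(a,p)'β` of the regressors
`x₁ = 1`, `x₂ = r(a,p)`, `x₃ = a − min_k p_k`, `x₄ = K`, `x₅ = (a + Σ_k p_k)/(1+K)`. -/
noncomputable def logitScore (K : ℕ) (hK : 0 < K) (β : Fin 5 → ℝ) (p : Fin K → ℝ)
    (a : ℝ) : ℝ :=
  β 0 * 1 + β 1 * priceRank K p a
    + β 2 * (a - Finset.univ.inf'
        (Finset.univ_nonempty_iff.mpr (Fin.pos_iff_nonempty.mp hK)) p)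
    + β 3 * (K : ℝ) + β 4 * ((a + ∑ k, p k) / (1 + (K : ℝ)))

/-- The logit sales probability `P̂(a,p) = e^{x'β}/(1 + e^{x'β})`. -/
noncomputable def logitProb (K : ℕ) (hK : 0 < K) (β : Fin 5 → ℝ) (p : Fin K → ℝ)
    (a : ℝ) : ℝ :=
  Real.exp (logitScore K hK β p a) / (1 + Real.exp (logitScore K hK β p a))

theorem priceRank_eq_sum (K : ℕ) (p : Fin K → ℝ) (a : ℝ) :
    priceRank K p a =
      1 + ∑ k, ((if p k < a then 1 else 0) + 0.5 * (if p k = a then 1 else 0) : ℝ) := by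
  simp only [priceRank, Finset.sum_add_distrib, ← Finset.mul_sum, Finset.sum_boole, add_assoc]

theorem priceRank_mono (K : ℕ) (p : Fin K → ℝ) : Monotone (priceRank K p) := by
  intro a a' h
  rw [priceRank_eq_sum, priceRank_eq_sum]
  gcongr 1 + ?_
  refine Finset.sum_le_sum fun k _ => ?_
  split_ifs <;> norm_num <;> grind

theorem logitScore_antitone (K : ℕ) (hK : 0 < K) (β : Fin 5 → ℝ) (p : Fin K → ℝ)
    (hβ2 : β 1 ≤ 0) (hβ3 : β 2 ≤ 0) (hβ5 : β 4 ≤ 0) : Antitone (logitScore K hK β p) := by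
  intro a a' h
  unfold logitScore
  refine add_le_add (add_le_add_left (add_le_add (add_le_add_right ?_ _) ?_) _) ?_
  · exact mul_le_mul_of_nonpos_left (priceRank_mono K p h) hβ2
  · exact mul_le_mul_of_nonpos_left (by gcongr) hβ3
  · exact mul_le_mul_of_nonpos_left (by gcongr) hβ5

/-- The logit sales probability is nonincreasing in the own offer price when the
price-sensitive coefficients `β₂, β₃, β₅` are nonpositive. -/
theorem logitProb_antitone (K : ℕ) (hK : 0 < K) (β : Fin 5 → ℝ) (p : Fin K → ℝ)
    (hβ2 : β 1 ≤ 0) (hβ3 : β 2 ≤ 0) (hβ5 : β 4 ≤ 0)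
    (a a' : ℝ) (h : a ≤ a') :
    logitProb K hK β p a' ≤ logitProb K hK β p a := by
  have hexp := Real.exp_le_exp.mpr (logitScore_antitone K hK β p hβ2 hβ3 hβ5 h)
  unfold logitProb
  rw [div_le_div_iff₀ (by positivity) (by positivity)]
  linarith
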